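/- Let f = id ∗ g be the Dirichlet convolution of the identity function with an arithmetic function g satisfying g(n) = O(1) for all n ≥ 1. Then ∑_{n ≤ x} f(⌊x/n⌋)/⌊x/n⌋ = x · ∑_{m ≥ 1} f(m)/(m²(m+1)) + O(x^{1/3} log x) as x → ∞. -/

import Mathlib

open Filter Finset

/-!
Dividing `f = id ∗ g` by `m` gives `f(m)/m = ∑_{d ∣ m} g(d)/d`, so the sum over `n ≤ x` equals
`∑_d (g(d)/d) · #{n ≤ x : d ∣ ⌊x/n⌋}`. It therefore suffices to count the `n` with `d ∣ ⌊x/n⌋` up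
to an error `≪ (x/d)^{1/3} log x`, since `∑_d |g(d)| d^{-4/3}` converges.

Split at `n ≈ √(x/d)`. Larger `n` are grouped by the value `dk` of `⌊x/n⌋`, which they take on the
interval `(x/(dk+1), x/(dk)]`; for smaller `n`, divisibility is a difference of two sawtooth values
at `x/(dn)` and `x/(dn) - 1/d`. Both cases lead to sums of `ψ(Y³/(n + a) + b)` over `n ≪ Y^{3/2}`,
where `Y³ = x/d`, and each dyadic block contributes `O(Y)`.

For a dyadic block, compare the periodic second Bernoulli function at `t ± ε` and `t`. It is the
minimum of the polynomial `B₂` over the integer translates of its argument, so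
`B₂({t ± ε}) ≤ B₂({t}) ± 2εψ(t) + ε²`, and its Fourier series converges absolutely. This bounds
sawtooth sums from both sides in terms of exponential sums, which van der Corput's second derivative
test estimates.
-/

open scoped FourierTransform fwdDiff Real

section ExponentialSums

lemma sum_range_smul_sub_succ {R M : Type*} [Ring R] [AddCommGroup M] [Module R M]
    (c : ℕ → R) (z : ℕ → M) (m : ℕ) :
    ∑ n ∈ range (m + 1), c n • (z n - z (n + 1)) =
      c 0 • z 0 + ∑ n ∈ range m, (c (n + 1) - c n) • z (n + 1) - c m • z (m + 1) := by
  rw [sum_range_by_parts]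
  simp_rw [sum_range_sub', Nat.add_sub_cancel, smul_sub, sum_sub_distrib, ← sum_smul,
    sum_range_sub c, sub_smul (c m)]
  abel

lemma norm_sum_range_smul_sub_succ_le {R M : Type*} [SeminormedRing R]
    [SeminormedAddCommGroup M] [Module R M] [IsBoundedSMul R M] {c : ℕ → R} {z : ℕ → M}
    (hz : ∀ n, ‖z n‖ ≤ 1) (m : ℕ) :
    ‖∑ n ∈ range (m + 1), c n • (z n - z (n + 1))‖ ≤
      ‖c 0‖ + ∑ n ∈ range m, ‖c (n + 1) - c n‖ + ‖c m‖ := by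
  have hsmul (r : R) (n : ℕ) : ‖r • z n‖ ≤ ‖r‖ :=
    (norm_smul_le r (z n)).trans (mul_le_of_le_one_right (norm_nonneg r) (hz n))
  rw [sum_range_smul_sub_succ]
  exact (norm_sub_le _ _).trans <| add_le_add ((norm_add_le _ _).trans <|
    add_le_add (hsmul _ _) (norm_sum_le_of_le _ fun _ _ => hsmul _ _)) (hsmul _ _)

lemma sin_pi_mul_eq_sin_pi_mul_one_sub (t : ℝ) : Real.sin (π * t) = Real.sin (π * (1 - t)) := by
  rw [mul_sub, mul_one, Real.sin_pi_sub]

lemma two_mul_le_sin_pi_mul {δ t : ℝ} (hδ : 0 ≤ δ) (ht : t ∈ Set.Icc δ (1 - δ)) :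
    2 * δ ≤ Real.sin (π * t) := by
  obtain ⟨h₁, h₂⟩ := ht
  wlog h : t ≤ 1 / 2 generalizing t
  · rw [sin_pi_mul_eq_sin_pi_mul_one_sub]
    exact this (by linarith) (by linarith) (by linarith)
  calc 2 * δ ≤ 2 * t := by linarith
    _ = 2 / π * (π * t) := by field_simp
    _ ≤ Real.sin (π * t) :=
        Real.mul_le_sin (by nlinarith [Real.pi_pos]) (by nlinarith [Real.pi_pos])

lemma sin_pi_mul_pos {t : ℝ} (ht : t ∈ Set.Ioo 0 1) : 0 < Real.sin (π * t) :=
  Real.sin_pos_of_pos_of_lt_pi (mul_pos Real.pi_pos ht.1)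
    (mul_lt_of_lt_one_right Real.pi_pos ht.2)

lemma antitoneOn_cot_pi_mul : AntitoneOn (fun t => Real.cot (π * t)) (Set.Ioo 0 1) := by
  intro s hs t ht hst
  simp only [Real.cot_eq_cos_div_sin]
  rw [div_le_div_iff₀ (sin_pi_mul_pos ht) (sin_pi_mul_pos hs)]
  have h : 0 ≤ Real.sin (π * t - π * s) := by
    refine Real.sin_nonneg_of_nonneg_of_le_pi ?_ ?_ <;> nlinarith [Real.pi_pos, hs.1, ht.2]
  rw [Real.sin_sub] at h
  linarith

lemma abs_cot_pi_mul_le {δ t : ℝ} (hδ : 0 < δ) (ht : t ∈ Set.Icc δ (1 - δ)) :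
    |Real.cot (π * t)| ≤ 1 / δ / 2 := by
  have hsin := two_mul_le_sin_pi_mul hδ.le ht
  rw [Real.cot_eq_cos_div_sin, abs_div, abs_of_pos (by linarith : 0 < Real.sin (π * t))]
  rw [div_div, mul_comm δ]
  exact div_le_div₀ zero_le_one (Real.abs_cos_le_one _) (by positivity) hsin

/-- The inverse of `1 - 𝐞 t` for non-integral `t`, given by its real and imaginary parts. -/
noncomputable def invOneSubFourierChar (t : ℝ) : ℂ := 1 / 2 + (Real.cot (π * t) / 2 : ℝ) * Complex.I

lemma invOneSubFourierChar_mul_one_sub {t : ℝ} (ht : Real.sin (π * t) ≠ 0) :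
    invOneSubFourierChar t * (1 - 𝐞 t) = 1 := by
  have hsq := Real.sin_sq_add_cos_sq (π * t)
  rw [invOneSubFourierChar, Real.fourierChar_apply, mul_assoc, Complex.exp_mul_I,
    ← Complex.ofReal_cos, ← Complex.ofReal_sin, Real.cos_two_mul, Real.sin_two_mul,
    Real.cot_eq_cos_div_sin]
  generalize Real.sin (π * t) = s at *
  generalize Real.cos (π * t) = c at *
  apply Complex.ext
  · simp [sq]
    field_simp
    ring
  · simp [sq]
    field_simp
    linear_combination (-2 * c) * hsq

lemma fourierChar_eq_invOneSub_smul_sub_succ {φ : ℕ → ℝ} {n : ℕ} (hφ : Δ_[1] φ n ∈ Set.Ioo 0 1) :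
    (𝐞 (φ n) : ℂ) = invOneSubFourierChar (Δ_[1] φ n) • ((𝐞 (φ n) : ℂ) - 𝐞 (φ (n + 1))) := by
  have hsucc : φ (n + 1) = φ n + Δ_[1] φ n := by simp [fwdDiff]
  rw [hsucc, AddChar.map_add_eq_mul, Circle.coe_mul, smul_eq_mul]
  linear_combination
    -(𝐞 (φ n) : ℂ) * invOneSubFourierChar_mul_one_sub (sin_pi_mul_pos hφ).ne'

lemma norm_invOneSubFourierChar_le {δ t : ℝ} (hδ : 0 < δ) (ht : t ∈ Set.Icc δ (1 - δ)) :
    ‖invOneSubFourierChar t‖ ≤ 1 / 2 + 1 / δ / 4 := by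
  refine (norm_add_le _ _).trans (add_le_add (by simp) ?_)
  rw [norm_mul, Complex.norm_I, mul_one, Complex.norm_real, Real.norm_eq_abs, abs_div, abs_two,
    div_le_iff₀ two_pos]
  exact (abs_cot_pi_mul_le hδ ht).trans_eq (by field_simp; norm_num)

lemma norm_invOneSubFourierChar_sub {s t : ℝ} (hs : s ∈ Set.Ioo 0 1) (ht : t ∈ Set.Ioo 0 1)
    (hst : s ≤ t) : ‖invOneSubFourierChar t - invOneSubFourierChar s‖ =
      Real.cot (π * s) / 2 - Real.cot (π * t) / 2 := by
  have hsub : invOneSubFourierChar t - invOneSubFourierChar s =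
      (Real.cot (π * t) / 2 - Real.cot (π * s) / 2 : ℝ) * Complex.I := by
    simp only [invOneSubFourierChar]; push_cast; ring
  have hle : Real.cot (π * t) ≤ Real.cot (π * s) := antitoneOn_cot_pi_mul hs ht hst
  rw [hsub, norm_mul, Complex.norm_I, mul_one, Complex.norm_real, Real.norm_eq_abs,
    abs_of_nonpos (by linarith), neg_sub]

/-- The Kusmin–Landau inequality. As `cot` is monotone, the coefficients `(1 - 𝐞 (Δ φ n))⁻¹` of the
differences `𝐞 (φ n) - 𝐞 (φ (n + 1))` have bounded total variation. -/
lemma norm_sum_range_fourierChar_le {φ : ℕ → ℝ} {m : ℕ} {δ : ℝ} (hδ : 0 < δ)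
    (hmem : ∀ n < m, Δ_[1] φ n ∈ Set.Icc δ (1 - δ)) (hmono : MonotoneOn (Δ_[1] φ) (Set.Iio m)) :
    ‖∑ n ∈ range m, (𝐞 (φ n) : ℂ)‖ ≤ 2 / δ := by
  rcases m with _ | m
  · simp only [range_zero, sum_empty, norm_zero]
    positivity
  have hIoo {n : ℕ} (hn : n < m + 1) : Δ_[1] φ n ∈ Set.Ioo 0 1 :=
    ⟨hδ.trans_le (hmem n hn).1, (hmem n hn).2.trans_lt (by linarith)⟩
  have hvar : ∑ n ∈ range m,
      ‖invOneSubFourierChar (Δ_[1] φ (n + 1)) - invOneSubFourierChar (Δ_[1] φ n)‖ =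
        Real.cot (π * Δ_[1] φ 0) / 2 - Real.cot (π * Δ_[1] φ m) / 2 := by
    rw [← sum_range_sub' fun n => Real.cot (π * Δ_[1] φ n) / 2]
    refine sum_congr rfl fun n hn => ?_
    have hn : n < m := mem_range.1 hn
    exact norm_invOneSubFourierChar_sub (hIoo (by lia)) (hIoo (by lia))
      (hmono (by simp; lia) (by simp; lia) n.le_succ)
  rw [sum_congr rfl fun n hn => fourierChar_eq_invOneSub_smul_sub_succ (hIoo (mem_range.1 hn))]
  refine (norm_sum_range_smul_sub_succ_le (fun n => (Circle.norm_coe _).le) m).trans ?_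
  have h₀ := hmem 0 m.succ_pos
  have hₘ := hmem m m.lt_succ_self
  have hδ₁ : 1 ≤ 1 / δ := by
    rw [one_le_div hδ]
    linarith [h₀.1, h₀.2]
  rw [hvar, show 2 / δ = 2 * (1 / δ) by ring]
  linarith [(abs_le.1 (abs_cot_pi_mul_le hδ h₀)).2, (abs_le.1 (abs_cot_pi_mul_le hδ hₘ)).1,
    norm_invOneSubFourierChar_le hδ h₀, norm_invOneSubFourierChar_le hδ hₘ]

lemma fourierChar_sub_intCast_mul_natCast (t : ℝ) (k : ℤ) (n : ℕ) : 𝐞 (t - k * n) = 𝐞 t := by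
  rw [Real.fourierChar_apply', Real.fourierChar_apply', mul_sub, mul_comm (2 * π) (k * n)]
  exact_mod_cast Circle.periodic_exp.sub_int_mul_eq (k * n)

lemma norm_sum_Ico_fourierChar_le {φ : ℕ → ℝ} {a b : ℕ} {δ : ℝ} (k : ℤ) (hδ : 0 < δ)
    (hmem : ∀ n ∈ Ico a b, Δ_[1] φ n ∈ Set.Icc (k + δ) (k + 1 - δ))
    (hmono : MonotoneOn (Δ_[1] φ) (Set.Ico a b)) :
    ‖∑ n ∈ Ico a b, (𝐞 (φ n) : ℂ)‖ ≤ 2 / δ := by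
  set ψ : ℕ → ℝ := fun n => φ (a + n) - k * n
  have hψ (n : ℕ) : Δ_[1] ψ n = Δ_[1] φ (a + n) - k := by
    simp only [ψ, fwdDiff, ← add_assoc]; push_cast; ring
  have h : ‖∑ n ∈ range (b - a), (𝐞 (ψ n) : ℂ)‖ ≤ 2 / δ := by
    refine norm_sum_range_fourierChar_le hδ (fun n hn => ?_) fun n hn n' hn' hle => ?_
    · have := hmem (a + n) (by rw [mem_Ico]; lia)
      rw [hψ]
      constructor <;> linarith [this.1, this.2]
    · rw [hψ, hψ]
      simp only [Set.mem_Iio] at hn hn'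
      exact sub_le_sub_right (hmono (by simp; lia) (by simp; lia) (by lia)) _
  rw [sum_Ico_eq_sum_range]
  simpa only [ψ, fourierChar_sub_intCast_mul_natCast] using h

lemma exists_filter_range_eq_Ico {N : ℕ} {s : Set ℝ} [DecidablePred (· ∈ s)] (hs : s.OrdConnected)
    {g : ℕ → ℝ} (hg : MonotoneOn g (Set.Iio N)) :
    ∃ a b, {n ∈ range N | g n ∈ s} = Ico a b := by
  set t := {n ∈ range N | g n ∈ s} with ht
  have hmem {n : ℕ} : n ∈ t ↔ n < N ∧ g n ∈ s := by rw [ht, mem_filter, mem_range]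
  rcases t.eq_empty_or_nonempty with h | hne
  · exact ⟨0, 0, by simp [h]⟩
  refine ⟨t.min' hne, t.max' hne + 1, Subset.antisymm (fun n hn => ?_) fun n hn => ?_⟩
  · exact mem_Ico.2 ⟨t.min'_le n hn, Nat.lt_succ_of_le (t.le_max' n hn)⟩
  · obtain ⟨hmin, hmax⟩ := mem_Ico.1 hn
    obtain ⟨h₁, h₁'⟩ := hmem.1 (t.min'_mem hne)
    obtain ⟨h₂, h₂'⟩ := hmem.1 (t.max'_mem hne)
    have hnN : n < N := by lia
    exact hmem.2 ⟨hnN, hs.out h₁' h₂' ⟨hg h₁ hnN hmin, hg hnN h₂ (by lia)⟩⟩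

lemma monotoneOn_of_sub_mul {g : ℕ → ℝ} {s : Set ℕ} {lam : ℝ} (hlam : 0 ≤ lam)
    (hg : MonotoneOn (fun n => g n - lam * n) s) : MonotoneOn g s := fun m hm n hn hmn => by
  have h := hg hm hn hmn
  have : lam * m ≤ lam * n := by gcongr
  simp only at h
  linarith

lemma card_filter_range_mem_Icc_le {g : ℕ → ℝ} {N : ℕ} {lam w p : ℝ} (hlam : 0 < lam) (hw : 0 ≤ w)
    (hg : MonotoneOn (fun n => g n - lam * n) (Set.Iio N)) :
    (#{n ∈ range N | g n ∈ Set.Icc p (p + w)} : ℝ) ≤ w / lam + 1 := by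
  obtain ⟨a, b, hab⟩ := exists_filter_range_eq_Ico (Set.ordConnected_Icc (a := p) (b := p + w))
    (monotoneOn_of_sub_mul hlam.le hg)
  have hmem {n : ℕ} (hn : n ∈ Ico a b) : n < N ∧ g n ∈ Set.Icc p (p + w) := by
    rwa [← hab, mem_filter, mem_range] at hn
  rw [hab, Nat.card_Ico]
  rcases Nat.lt_or_ge a b with hlt | hge
  · obtain ⟨b, rfl⟩ := Nat.exists_eq_add_of_lt hlt
    obtain ⟨haN, ha⟩ := hmem (n := a) (by simp)
    obtain ⟨hbN, hb⟩ := hmem (n := a + b) (by simp)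
    have hgrow := hg haN hbN (by lia)
    push_cast at hgrow
    have hb : (b : ℝ) ≤ w / lam := by
      rw [le_div_iff₀ hlam]
      linarith [ha.1, hb.2]
    rw [show a + b + 1 - a = b + 1 by lia]
    push_cast
    linarith
  · rw [Nat.sub_eq_zero_of_le hge]
    push_cast
    positivity

lemma norm_sum_fourierChar_le_card {ι : Type*} (s : Finset ι) (φ : ι → ℝ) :
    ‖∑ n ∈ s, (𝐞 (φ n) : ℂ)‖ ≤ #s :=
  (norm_sum_le_of_le _ fun n _ => (Circle.norm_coe (𝐞 (φ n))).le).trans_eq (by simp)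

lemma norm_sum_filter_fourierChar_le {φ : ℕ → ℝ} {N : ℕ} {δ : ℝ} (hδ : 0 < δ)
    (hφ : MonotoneOn (Δ_[1] φ) (Set.Iio N)) (k : ℤ) :
    ‖∑ n ∈ range N with Δ_[1] φ n ∈ Set.Icc (k + δ) (k + 1 - δ), (𝐞 (φ n) : ℂ)‖ ≤ 2 / δ := by
  obtain ⟨a, b, hab⟩ := exists_filter_range_eq_Ico (s := Set.Icc (k + δ) (k + 1 - δ))
    Set.ordConnected_Icc hφ
  have hsub {n : ℕ} (hn : n ∈ Ico a b) :
      n < N ∧ Δ_[1] φ n ∈ Set.Icc (k + δ) (k + 1 - δ) := by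
    rwa [← hab, mem_filter, mem_range] at hn
  rw [hab]
  exact norm_sum_Ico_fourierChar_le k hδ (fun n hn => (hsub hn).2)
    (hφ.mono fun n hn => (hsub (by simpa using hn)).1)

lemma norm_sum_fourierChar_floor_fiber_le {φ : ℕ → ℝ} {N : ℕ} {lam : ℝ} (hlam : 0 < lam)
    (hlam' : lam ≤ 1 / 4) (hφ : MonotoneOn (fun n => Δ_[1] φ n - lam * n) (Set.Iio N)) (k : ℤ) :
    ‖∑ n ∈ range N with ⌊Δ_[1] φ n⌋ = k, (𝐞 (φ n) : ℂ)‖ ≤ 5 / √lam := by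
  set δ := √lam
  have hδ : 0 < δ := Real.sqrt_pos.2 hlam
  have hδ_sq : δ * δ = lam := Real.mul_self_sqrt hlam.le
  have hδ_le : δ ≤ 1 / 2 := by nlinarith
  set s := {n ∈ range N | ⌊Δ_[1] φ n⌋ = k} with hs
  set mid := {n ∈ range N | Δ_[1] φ n ∈ Set.Icc (k + δ) (k + 1 - δ)} with hmid
  have hmids : mid ⊆ s := fun n hn => by
    simp only [hmid, hs, mem_filter, Int.floor_eq_iff] at hn ⊢
    exact ⟨hn.1, by linarith [hn.2.1], by linarith [hn.2.2]⟩
  have hrest : (#(s \ mid) : ℝ) ≤ 2 * (1 / δ + 1) := by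
    have hsub : s \ mid ⊆ {n ∈ range N | Δ_[1] φ n ∈ Set.Icc (k : ℝ) (k + δ)} ∪
        {n ∈ range N | Δ_[1] φ n ∈ Set.Icc (k + 1 - δ) (k + 1 - δ + δ)} := fun n hn => by
      simp only [hs, hmid, mem_union, mem_filter, Int.floor_eq_iff, Set.mem_Icc] at hn ⊢
      grind
    have hcard := (card_le_card hsub).trans (card_union_le _ _)
    rify at hcard
    have hwidth : δ / lam = 1 / δ := by rw [← hδ_sq]; field_simp
    have hleft := card_filter_range_mem_Icc_le (p := k) hlam hδ.le hφ
    have hright := card_filter_range_mem_Icc_le (p := k + 1 - δ) hlam hδ.le hφ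
    rw [hwidth] at hleft hright
    linarith
  have hmid_le := norm_sum_filter_fourierChar_le hδ (monotoneOn_of_sub_mul hlam.le hφ) k
  have htwo : 2 ≤ 1 / δ := by rw [le_div_iff₀ hδ]; linarith
  rw [← sum_sdiff hmids]
  calc _ ≤ 2 * (1 / δ + 1) + 2 / δ := (norm_add_le _ _).trans
        (add_le_add ((norm_sum_fourierChar_le_card (s \ mid) φ).trans hrest) hmid_le)
    _ = 4 * (1 / δ) + 2 := by ring
    _ ≤ 5 * (1 / δ) := by linarith
    _ = 5 / δ := by ring

lemma monotoneOn_sub_mul_Iio {g : ℕ → ℝ} {N : ℕ} {lam : ℝ}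
    (hg : ∀ n, n + 1 < N → lam ≤ Δ_[1] g n) : MonotoneOn (fun n => g n - lam * n) (Set.Iio N) := by
  refine monotoneOn_of_le_add_one Set.ordConnected_Iio fun n _ _ hn => ?_
  have h := hg n hn
  rw [fwdDiff] at h
  push_cast
  linarith

lemma card_Icc_floor_le {x y : ℝ} (hxy : x ≤ y) : (#(Icc ⌊x⌋ ⌊y⌋) : ℝ) ≤ y - x + 2 := by
  have hcard : (#(Icc ⌊x⌋ ⌊y⌋) : ℤ) = ⌊y⌋ + 1 - ⌊x⌋ := by
    rw [Int.card_Icc, Int.toNat_of_nonneg]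
    linarith [Int.floor_le_floor hxy]
  rify at hcard
  linarith [Int.floor_le y, Int.lt_floor_add_one x]

lemma sub_le_mul_of_fwdDiff_le {g : ℕ → ℝ} {N : ℕ} {c : ℝ}
    (hg : ∀ n, n + 1 < N → Δ_[1] g n ≤ c) (hN : 0 < N) : g (N - 1) - g 0 ≤ c * (N - 1 : ℕ) := by
  have h := monotoneOn_sub_mul_Iio (g := -g) (lam := -c) (N := N) (fun n hn => by
    have := hg n hn
    simp only [fwdDiff, Pi.neg_apply] at this ⊢
    linarith) hN (Nat.sub_one_lt hN.ne') (Nat.zero_le _)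
  simp only [Pi.neg_apply, Nat.cast_zero] at h
  linarith

/-- Van der Corput's second derivative test. The Kusmin–Landau inequality applies where the slope is
at distance at least `√lam` from the integers, and few terms remain. -/
lemma norm_sum_range_fourierChar_le_of_fwdDiff_fwdDiff_mem {φ : ℕ → ℝ} {N : ℕ} {lam α : ℝ}
    (hlam : 0 < lam) (hα : 1 ≤ α)
    (hφ : ∀ n, n + 1 < N → Δ_[1] (Δ_[1] φ) n ∈ Set.Icc lam (α * lam)) :
    ‖∑ n ∈ range N, (𝐞 (φ n) : ℂ)‖ ≤ (α * lam * N + 2) * (5 / √lam) := by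
  have hsqrt : 0 < √lam := Real.sqrt_pos.2 hlam
  rcases le_or_gt lam (1 / 4) with hlam' | hlam'
  · rcases Nat.eq_zero_or_pos N with rfl | hN
    · simp only [range_zero, sum_empty, norm_zero]
      positivity
    set g : ℕ → ℝ := Δ_[1] φ
    have hlow := monotoneOn_sub_mul_Iio fun n hn => (hφ n hn).1
    have hmono : MonotoneOn g (Set.Iio N) := monotoneOn_of_sub_mul hlam.le hlow
    have hfirst : 0 ∈ Set.Iio N := hN
    have hlast : N - 1 ∈ Set.Iio N := Nat.sub_one_lt hN.ne'
    have hrange : g (N - 1) - g 0 ≤ α * lam * N :=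
      (sub_le_mul_of_fwdDiff_le (fun n hn => (hφ n hn).2) hN).trans (by gcongr; exact N.sub_le 1)
    rw [← sum_fiberwise_of_maps_to (t := Icc ⌊g 0⌋ ⌊g (N - 1)⌋) (g := fun n => ⌊g n⌋) fun n hn => by
      have hn : n < N := mem_range.1 hn
      exact mem_Icc.2 ⟨Int.floor_le_floor (hmono hfirst hn n.zero_le),
        Int.floor_le_floor (hmono hn hlast (by lia))⟩]
    refine (norm_sum_le_of_le _ fun k _ =>
      norm_sum_fourierChar_floor_fiber_le hlam hlam' hlow k).trans ?_
    rw [sum_const, nsmul_eq_mul]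
    gcongr
    linarith [card_Icc_floor_le (hmono hfirst hlast (Nat.zero_le _))]
  · have hhalf : 1 / 2 ≤ √lam := Real.le_sqrt_of_sq_le (by linarith)
    calc ‖∑ n ∈ range N, (𝐞 (φ n) : ℂ)‖ ≤ N := by
          simpa using norm_sum_fourierChar_le_card (range N) φ
      _ ≤ α * (√lam * 5) * N := le_mul_of_one_le_left (by positivity) (by nlinarith)
      _ = α * lam * N * (5 / √lam) := by
          nth_rw 2 [← Real.mul_self_sqrt hlam.le]
          field_simp
      _ ≤ (α * lam * N + 2) * (5 / √lam) := by gcongr; linarith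

end ExponentialSums

section Sawtooth

/-- The sawtooth function `ψ(t) = {t} - 1/2`: the error made in replacing `⌊t⌋` by `t - 1/2`,
with the opposite sign. -/
noncomputable def sawtooth (t : ℝ) : ℝ := Int.fract t - 1 / 2

lemma abs_sawtooth_le (t : ℝ) : |sawtooth t| ≤ 1 / 2 := by
  rw [sawtooth, abs_le]
  constructor <;> linarith [Int.fract_nonneg t, Int.fract_lt_one t]

lemma intCast_floor_eq_sub_sawtooth (t : ℝ) : (⌊t⌋ : ℝ) = t - 1 / 2 - sawtooth t := by
  rw [sawtooth, Int.fract]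
  ring

lemma abs_sum_sawtooth_le_card {ι : Type*} (s : Finset ι) (F : ι → ℝ) :
    |∑ n ∈ s, sawtooth (F n)| ≤ #s / 2 :=
  (abs_sum_le_sum_abs _ _).trans <| (sum_le_sum fun n _ => abs_sawtooth_le (F n)).trans_eq <| by
    rw [sum_const, nsmul_eq_mul, mul_one_div]

lemma bernoulliFun_two_fract_le (t : ℝ) : bernoulliFun 2 (Int.fract t) ≤ bernoulliFun 2 t := by
  have hkey : 0 ≤ (⌊t⌋ : ℝ) * (⌊t⌋ - 1 + 2 * Int.fract t) := by
    have h₀ := Int.fract_nonneg t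
    have h₁ := Int.fract_lt_one t
    rcases lt_trichotomy ⌊t⌋ 0 with h | h | h
    · have h : (⌊t⌋ : ℝ) ≤ -1 := by exact_mod_cast Int.le_sub_one_of_lt h
      exact mul_nonneg_of_nonpos_of_nonpos (by linarith) (by linarith)
    · simp [h]
    · have h : (1 : ℝ) ≤ ⌊t⌋ := by exact_mod_cast h
      exact mul_nonneg (by linarith) (by linarith)
  have hdiff : t ^ 2 - t - (Int.fract t ^ 2 - Int.fract t) =
      ⌊t⌋ * (⌊t⌋ - 1 + 2 * Int.fract t) := by
    rw [Int.fract]; ring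
  rw [bernoulliFun_two, bernoulliFun_two]
  linarith

lemma bernoulliFun_two_fract_add_le (t ε : ℝ) :
    bernoulliFun 2 (Int.fract (t + ε)) ≤
      bernoulliFun 2 (Int.fract t) + 2 * ε * sawtooth t + ε ^ 2 := by
  have hfract : Int.fract (t + ε) = Int.fract (Int.fract t + ε) := by
    rw [← Int.fract_add_intCast (Int.fract t + ε) ⌊t⌋, add_right_comm, Int.fract_add_floor]
  rw [hfract]
  refine (bernoulliFun_two_fract_le _).trans_eq ?_
  rw [bernoulliFun_two, bernoulliFun_two, sawtooth]
  ring

lemma re_fourierChar (t : ℝ) : (𝐞 t : ℂ).re = Real.cos (2 * π * t) := by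
  rw [Real.fourierChar_apply, Complex.exp_ofReal_mul_I_re]

lemma hasSum_re_fourierChar_div_sq (t : ℝ) :
    HasSum (fun h : ℕ => (𝐞 (h * t) : ℂ).re / (h : ℝ) ^ 2)
      (π ^ 2 * bernoulliFun 2 (Int.fract t)) := by
  convert hasSum_one_div_nat_pow_mul_cos (k := 1) one_ne_zero (x := Int.fract t)
    ⟨Int.fract_nonneg t, (Int.fract_lt_one t).le⟩ using 1
  · ext n
    have harg : 2 * π * n * Int.fract t = 2 * π * (n * t) - (n * ⌊t⌋ : ℤ) * (2 * π) := by
      rw [Int.fract]; push_cast; ring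
    rw [harg, Real.cos_sub_int_mul_two_pi, re_fourierChar, mul_one, one_div_mul_eq_div]
  · rw [bernoulliFun]
    norm_num [Nat.factorial]
    exact Or.inl (by ring)

lemma norm_fourierChar_sub_one_le (t : ℝ) : ‖(𝐞 t : ℂ) - 1‖ ≤ 2 * π * min 1 |t| := by
  rw [mul_min_of_nonneg _ _ Real.two_pi_pos.le]
  refine le_min ?_ ?_
  · refine (norm_sub_le _ _).trans ?_
    rw [Circle.norm_coe, norm_one]
    linarith [Real.pi_gt_three]
  · rw [Real.fourierChar_apply, mul_comm _ Complex.I]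
    refine (Real.norm_exp_I_mul_ofReal_sub_one_le (x := 2 * π * t)).trans_eq ?_
    rw [Real.norm_eq_abs, abs_mul, abs_of_pos Real.two_pi_pos]

lemma one_le_two_mul_sqrt_add_one_mul_sub (n : ℕ) :
    1 ≤ 2 * √(n + 1 : ℝ) * (√(n + 1 : ℝ) - √n) := by
  have h₁ := Real.mul_self_sqrt (by positivity : (0 : ℝ) ≤ n)
  have h₂ := Real.mul_self_sqrt (by positivity : (0 : ℝ) ≤ n + 1)
  nlinarith [sq_nonneg (√(n + 1 : ℝ) - √n)]

lemma sum_range_inv_sqrt_le (m : ℕ) : ∑ h ∈ range (m + 1), (√(h : ℝ))⁻¹ ≤ 2 * √m := by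
  induction m with
  | zero => simp
  | succ m ih =>
    have hstep : (√((m + 1 : ℕ) : ℝ))⁻¹ ≤ 2 * (√((m + 1 : ℕ) : ℝ) - √m) := by
      rw [inv_le_iff_one_le_mul₀ (by positivity)]
      push_cast
      linarith [one_le_two_mul_sqrt_add_one_mul_sub m]
    rw [sum_range_succ]
    linarith

lemma sum_Ico_inv_mul_sqrt_le_sub {m n : ℕ} (hm : 0 < m) (hmn : m ≤ n) :
    ∑ h ∈ Ico (m + 1) (n + 1), ((h : ℝ) * √h)⁻¹ ≤ 2 / √m - 2 / √n := by
  induction n, hmn using Nat.le_induction with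
  | base => simp
  | succ n hmn ih =>
    have hn : (0 : ℝ) < n := by exact_mod_cast hm.trans_le hmn
    have hstep : (((n + 1 : ℕ) : ℝ) * √((n + 1 : ℕ) : ℝ))⁻¹ ≤
        2 / √n - 2 / √((n + 1 : ℕ) : ℝ) := by
      have hkey := one_le_two_mul_sqrt_add_one_mul_sub n
      have hsq := Real.mul_self_sqrt (by positivity : (0 : ℝ) ≤ n + 1)
      have hle : √(n : ℝ) ≤ √(n + 1) := Real.sqrt_le_sqrt (by linarith)
      push_cast
      rw [div_sub_div _ _ (by positivity) (by positivity), ← one_div,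
        div_le_div_iff₀ (by positivity) (by positivity)]
      calc 1 * (√n * √(n + 1)) ≤ (2 * √(n + 1 : ℝ) * (√(n + 1 : ℝ) - √n)) *
            (√(n + 1) * √(n + 1)) := by gcongr
        _ = _ := by rw [hsq]; ring
    rw [sum_Ico_succ_top (by lia)]
    linarith

lemma sum_range_min_div_mul_sqrt_le {ε : ℝ} (hε : 0 < ε) {m : ℕ} (hmε : m * ε ≤ 1) :
    ∑ h ∈ range (m + 1), min 1 (h * ε) / (h * √h) ≤ 2 * √ε := by
  calc _ ≤ ∑ h ∈ range (m + 1), ε * (√(h : ℝ))⁻¹ := sum_le_sum fun h _ => by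
        rcases Nat.eq_zero_or_pos h with rfl | hh
        · simp
        calc min 1 (h * ε) / (h * √h) ≤ h * ε / (h * √h) := by gcongr; exact min_le_right _ _
          _ = ε * (√(h : ℝ))⁻¹ := by field_simp
    _ ≤ ε * (2 * √m) := by rw [← mul_sum]; gcongr; exact sum_range_inv_sqrt_le m
    _ = 2 * √ε * √(m * ε) := by
        rw [Real.sqrt_mul (by positivity)]
        nth_rw 1 [← Real.mul_self_sqrt hε.le]
        ring
    _ ≤ 2 * √ε := mul_le_of_le_one_right (by positivity) (Real.sqrt_le_one.2 hmε)

lemma sum_Ico_min_div_mul_sqrt_le {ε : ℝ} (hε : 0 < ε) {m n : ℕ} (hm : 0 < m) (hmn : m ≤ n)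
    (hmε : 1 < (m + 1) * ε) :
    ∑ h ∈ Ico (m + 1) (n + 1), min 1 (h * ε) / (h * √h) ≤ 3 * √ε := by
  have hm₁ : (1 : ℝ) ≤ m := by exact_mod_cast hm
  calc _ ≤ ∑ h ∈ Ico (m + 1) (n + 1), ((h : ℝ) * √h)⁻¹ := sum_le_sum fun h _ => by
        rw [← one_div]; gcongr; exact min_le_left _ _
    _ ≤ 2 / √m := (sum_Ico_inv_mul_sqrt_le_sub hm hmn).trans (sub_le_self _ (by positivity))
    _ ≤ 3 * √ε := by
        rw [div_le_iff₀ (by positivity), mul_assoc, ← Real.sqrt_mul hε.le]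
        have : 2 / 3 ≤ √(ε * m) := Real.le_sqrt_of_sq_le (by nlinarith)
        linarith

lemma sum_min_div_mul_sqrt_le {ε : ℝ} (hε : 0 < ε) (hε₁ : ε ≤ 1) (s : Finset ℕ) :
    ∑ h ∈ s, min 1 (h * ε) / (h * √h) ≤ 5 * √ε := by
  obtain ⟨M, hM⟩ := s.exists_nat_subset_range
  set m := ⌊1 / ε⌋₊
  have hm : 0 < m := Nat.floor_pos.2 (one_le_one_div hε hε₁)
  have hsmall := sum_range_min_div_mul_sqrt_le (m := m) hε
    ((le_div_iff₀ hε).1 (Nat.floor_le (by positivity)))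
  have hlarge := sum_Ico_min_div_mul_sqrt_le hε hm (Nat.le_add_right m M)
    ((div_lt_iff₀ hε).1 (Nat.lt_floor_add_one _))
  calc ∑ h ∈ s, min 1 (h * ε) / (h * √h)
      ≤ ∑ h ∈ range (m + M + 1), min 1 (h * ε) / (h * √h) :=
        sum_le_sum_of_subset_of_nonneg (hM.trans (range_mono (by lia))) fun _ _ _ => by positivity
    _ ≤ 5 * √ε := by
        rw [← sum_range_add_sum_Ico _ (by lia : m + 1 ≤ m + M + 1)]
        linarith

variable {ι : Type*} {s : Finset ι} {F : ι → ℝ} {B : ℝ}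

lemma abs_sum_re_fourierChar_add_sub_div_sq_le (ε : ℝ)
    (hB : ∀ h : ℕ, 0 < h → ‖∑ n ∈ s, (𝐞 (h * F n) : ℂ)‖ ≤ B * √h) (h : ℕ) :
    |∑ n ∈ s, ((𝐞 (h * (F n + ε)) : ℂ).re / h ^ 2 - (𝐞 (h * F n) : ℂ).re / h ^ 2)| ≤
      2 * π * B * (min 1 (h * |ε|) / (h * √h)) := by
  have hB₀ : 0 ≤ B := by simpa using (norm_nonneg _).trans (hB 1 one_pos)
  rcases Nat.eq_zero_or_pos h with rfl | hh
  · simp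
  have hfactor : ∑ n ∈ s, ((𝐞 (h * (F n + ε)) : ℂ).re / h ^ 2 - (𝐞 (h * F n) : ℂ).re / h ^ 2) =
      ((∑ n ∈ s, (𝐞 (h * F n) : ℂ)) * ((𝐞 (h * ε) : ℂ) - 1)).re / h ^ 2 := by
    rw [sum_mul, Complex.re_sum, sum_div]
    refine sum_congr rfl fun n _ => ?_
    rw [mul_add, AddChar.map_add_eq_mul, Circle.coe_mul, mul_sub, mul_one, Complex.sub_re, sub_div]
  rw [hfactor, abs_div, abs_of_pos (by positivity : (0 : ℝ) < h ^ 2)]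
  calc _ ≤ B * √h * (2 * π * min 1 (h * |ε|)) / h ^ 2 := by
        gcongr
        refine (Complex.abs_re_le_norm _).trans ((norm_mul_le _ _).trans ?_)
        gcongr
        · exact hB h hh
        · exact (norm_fourierChar_sub_one_le _).trans_eq (by rw [abs_mul, Nat.abs_cast])
    _ = _ := by
        have hsq := Real.mul_self_sqrt (Nat.cast_nonneg (α := ℝ) h)
        field_simp
        linear_combination B * min 1 (h * |ε|) * hsq

lemma abs_sum_bernoulliFun_two_fract_add_sub_le {ε : ℝ} (hε : ε ≠ 0) (hε₁ : |ε| ≤ 1)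
    (hB : ∀ h : ℕ, 0 < h → ‖∑ n ∈ s, (𝐞 (h * F n) : ℂ)‖ ≤ B * √h) :
    |∑ n ∈ s, (bernoulliFun 2 (Int.fract (F n + ε)) - bernoulliFun 2 (Int.fract (F n)))| ≤
      4 * B * √|ε| := by
  have hB₀ : 0 ≤ B := by simpa using (norm_nonneg _).trans (hB 1 one_pos)
  have hsum := hasSum_sum (s := s) fun n _ =>
    (hasSum_re_fourierChar_div_sq (F n + ε)).sub (hasSum_re_fourierChar_div_sq (F n))
  have hlim := le_of_tendsto' hsum.abs fun t => (abs_sum_le_sum_abs _ t).trans <|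
    (sum_le_sum fun h _ => abs_sum_re_fourierChar_add_sub_div_sq_le ε hB h).trans <| by
      rw [← mul_sum]
      exact mul_le_mul_of_nonneg_left
        (sum_min_div_mul_sqrt_le (abs_pos.2 hε) hε₁ t) (by positivity)
  simp_rw [← mul_sub] at hlim
  rw [← mul_sum, abs_mul, abs_of_pos (by positivity : 0 < π ^ 2)] at hlim
  refine le_of_mul_le_mul_left (hlim.trans ?_) (by positivity : 0 < π ^ 2)
  calc 2 * π * B * (5 * √|ε|) = π * 10 * (B * √|ε|) := by ring
    _ ≤ π * (4 * π) * (B * √|ε|) := by gcongr; linarith [Real.pi_gt_three]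
    _ = π ^ 2 * (4 * B * √|ε|) := by ring

lemma abs_sum_sawtooth_le_of_norm_sum_fourierChar_le {ε : ℝ} (hε : 0 < ε) (hε₁ : ε ≤ 1)
    (hB : ∀ h : ℕ, 0 < h → ‖∑ n ∈ s, (𝐞 (h * F n) : ℂ)‖ ≤ B * √h) :
    |∑ n ∈ s, sawtooth (F n)| ≤ ε * #s + 2 * B / √ε := by
  have hone {η : ℝ} (hη : |η| = ε) :
      -(4 * B * √ε) ≤ 2 * η * ∑ n ∈ s, sawtooth (F n) + #s * ε ^ 2 := by
    have h := abs_sum_bernoulliFun_two_fract_add_sub_le (by rw [← abs_pos, hη]; exact hε)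
      (hη.trans_le hε₁) hB
    rw [hη] at h
    refine (abs_le.1 h).1.trans ?_
    calc _ ≤ ∑ n ∈ s, (2 * η * sawtooth (F n) + η ^ 2) :=
          sum_le_sum fun n _ => by linarith [bernoulliFun_two_fract_add_le (F n) η]
      _ = _ := by rw [sum_add_distrib, ← mul_sum, sum_const, nsmul_eq_mul, ← hη, sq_abs]
  have hpos := hone (abs_of_pos hε)
  have hneg := hone ((abs_neg ε).trans (abs_of_pos hε))
  have hcard : 0 ≤ #s * ε ^ 2 := by positivity
  have key : 2 * ε * |∑ n ∈ s, sawtooth (F n)| ≤ 2 * ε * (ε * #s + 2 * B / √ε) := by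
    calc _ ≤ 4 * B * √ε + #s * ε ^ 2 := by
          rcases abs_cases (∑ n ∈ s, sawtooth (F n)) with h | h <;> rw [h.1] <;> linarith
      _ ≤ 4 * B * √ε + 2 * (#s * ε ^ 2) := by linarith
      _ = 4 * B * (ε / √ε) + 2 * (#s * ε ^ 2) := by rw [Real.div_sqrt]
      _ = _ := by ring
  exact le_of_mul_le_mul_left key (by positivity)

end Sawtooth

section HyperbolaBlocks

lemma fwdDiff_fwdDiff_mul_div_add_natCast {w : ℝ} (hw : 0 < w) (h y b : ℝ) (n : ℕ) :
    Δ_[1] (Δ_[1] fun n : ℕ => h * (y / (w + n) + b)) n =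
      2 * (h * y) / ((w + n) * (w + n + 1) * (w + n + 2)) := by
  simp only [fwdDiff]
  push_cast
  field_simp
  ring

lemma fwdDiff_fwdDiff_mul_div_add_mem_Icc {w h y : ℝ} (hw : 0 < w) (hhy : 0 ≤ h * y) (b : ℝ)
    {n : ℕ} (hn : n + 2 ≤ w) :
    Δ_[1] (Δ_[1] fun n : ℕ => h * (y / (w + n) + b)) n ∈
      Set.Icc (2 * (h * y) / (2 * w) ^ 3) (8 * (2 * (h * y) / (2 * w) ^ 3)) := by
  rw [fwdDiff_fwdDiff_mul_div_add_natCast hw]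
  constructor
  · gcongr
    calc (w + n) * (w + n + 1) * (w + n + 2) ≤ 2 * w * (2 * w) * (2 * w) := by
          gcongr <;> linarith
      _ = (2 * w) ^ 3 := by ring
  · calc _ ≤ 2 * (h * y) / (w * w * w) := by gcongr <;> linarith
      _ = 8 * (2 * (h * y) / (2 * w) ^ 3) := by field_simp; ring

lemma norm_sum_range_fourierChar_div_add_le {N h : ℕ} {w y : ℝ} (hw : 0 < w) (hNw : N ≤ w)
    (hwy : w ^ 2 ≤ 9 * y) (hh : 0 < h) (b : ℝ) :
    ‖∑ n ∈ range N, (𝐞 (h * (y / (w + n) + b)) : ℂ)‖ ≤ 200 * √(y / w) * √h := by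
  have hy : 0 < y := by nlinarith
  have hh₁ : (1 : ℝ) ≤ h := by exact_mod_cast hh
  set q := √(y / w) * √h with hq
  have hq₀ : 0 < q := by positivity
  have hq_sq : q ^ 2 = h * y / w := by
    rw [hq, mul_pow, Real.sq_sqrt (by positivity), Real.sq_sqrt (by positivity)]
    ring
  have hwq : w ≤ 9 * q ^ 2 := by
    rw [hq_sq, mul_div_assoc', le_div_iff₀ hw]
    nlinarith
  have hlam : 2 * (h * y) / (2 * w) ^ 3 = (q / (2 * w)) ^ 2 := by
    rw [div_pow, hq_sq]
    field_simp
  calc _ ≤ (8 * (q / (2 * w)) ^ 2 * N + 2) * (5 / √((q / (2 * w)) ^ 2)) := by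
        rw [← hlam]
        refine norm_sum_range_fourierChar_le_of_fwdDiff_fwdDiff_mem (by positivity) (by norm_num)
          fun n hn => fwdDiff_fwdDiff_mul_div_add_mem_Icc hw (by positivity) b ?_
        exact le_trans (by exact_mod_cast hn) hNw
    _ = 20 * q * (N / w) + 20 * (w / q) := by
        rw [Real.sqrt_sq (by positivity)]
        field_simp
        ring
    _ ≤ 20 * q * 1 + 20 * (9 * q) := by
        gcongr
        · exact (div_le_one hw).2 hNw
        · rw [div_le_iff₀ hq₀]
          linarith
    _ = 200 * √(y / w) * √h := by rw [hq]; ring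

lemma abs_sum_range_sawtooth_div_add_le {N : ℕ} {w Y : ℝ} (hw : 0 < w) (hY : 0 < Y) (hNw : N ≤ w)
    (hwY : w ^ 2 ≤ 9 * Y ^ 3) (b : ℝ) :
    |∑ n ∈ range N, sawtooth (Y ^ 3 / (w + n) + b)| ≤ 401 * Y := by
  rcases le_total w Y with h | h
  · refine (abs_sum_sawtooth_le_card _ _).trans ?_
    rw [card_range]
    linarith
  calc _ ≤ Y / w * #(range N) + 2 * (200 * √(Y ^ 3 / w)) / √(Y / w) :=
        abs_sum_sawtooth_le_of_norm_sum_fourierChar_le (by positivity) ((div_le_one hw).2 h)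
          fun h hh => norm_sum_range_fourierChar_div_add_le hw hNw hwY hh b
    _ = Y * (N / w) + 400 * (√(Y ^ 3 / w) / √(Y / w)) := by rw [card_range]; ring
    _ = Y * (N / w) + 400 * Y := by
        rw [← Real.sqrt_div' _ (by positivity),
          show Y ^ 3 / w / (Y / w) = Y ^ 2 by field_simp, Real.sqrt_sq hY.le]
    _ ≤ Y * 1 + 400 * Y := by gcongr; exact (div_le_one hw).2 hNw
    _ = 401 * Y := by ring

lemma abs_sum_Ico_sawtooth_div_add_le_of_le_two_pow {Y a : ℝ} (hY : 0 < Y) (ha : 0 ≤ a)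
    (ha₁ : a ≤ 1) (b : ℝ) {j N : ℕ} (hN : N ≤ 2 ^ j) (hNY : (N : ℝ) ^ 2 ≤ 9 * Y ^ 3) :
    |∑ n ∈ Ico 1 N, sawtooth (Y ^ 3 / (n + a) + b)| ≤ 401 * Y * j := by
  induction j generalizing N with
  | zero => simp [Ico_eq_empty_of_le (by simpa using hN : N ≤ 1)]
  | succ j ih =>
    rcases le_or_gt N (2 ^ j) with h | h
    · refine (ih h hNY).trans ?_
      gcongr
      exact j.le_succ
    have hw : ((2 ^ j : ℕ) : ℝ) + a ≤ N := by
      have : ((2 ^ j : ℕ) : ℝ) + 1 ≤ N := by exact_mod_cast h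
      linarith
    have hinit := ih le_rfl (le_trans (by gcongr) hNY)
    have hblock := abs_sum_range_sawtooth_div_add_le (N := N - 2 ^ j) (w := (2 ^ j : ℕ) + a)
      (by positivity) hY (le_add_of_le_of_nonneg (by exact_mod_cast (by lia)) ha)
      (le_trans (by gcongr) hNY) b
    simp_rw [add_right_comm _ a, ← Nat.cast_add] at hblock
    rw [← sum_Ico_consecutive _ Nat.one_le_two_pow h.le, sum_Ico_eq_sum_range _ (2 ^ j)]
    calc _ ≤ 401 * Y * j + 401 * Y := (abs_add_le _ _).trans (add_le_add hinit hblock)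
      _ = 401 * Y * (j + 1 : ℕ) := by push_cast; ring

lemma abs_sum_Ioc_sawtooth_div_add_le {Y a : ℝ} (hY : 0 < Y) (ha : 0 ≤ a) (ha₁ : a ≤ 1) (b : ℝ)
    {U X : ℕ} (hUX : U ≤ X) (hUY : (U + 1 : ℝ) ^ 2 ≤ 9 * Y ^ 3) :
    |∑ n ∈ Ioc 0 U, sawtooth (Y ^ 3 / (n + a) + b)| ≤ 802 * Y * (1 + Real.log X) := by
  have hU : U + 1 ≤ 2 ^ (Nat.log 2 X + 1) :=
    Nat.succ_le_of_lt (hUX.trans_lt (Nat.lt_pow_succ_log_self one_lt_two X))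
  have hlog : (Nat.log 2 X : ℝ) ≤ 2 * Real.log X := by
    refine (Real.natLog_le_logb X 2).trans ?_
    rw [Real.logb, Nat.cast_ofNat, div_le_iff₀ (by positivity)]
    nlinarith [Real.log_two_gt_d9, Real.log_natCast_nonneg X]
  calc _ ≤ 401 * Y * (Nat.log 2 X + 1 : ℕ) :=
        abs_sum_Ico_sawtooth_div_add_le_of_le_two_pow hY ha ha₁ b hU (by exact_mod_cast hUY)
    _ ≤ 401 * Y * (2 * (1 + Real.log X)) := by
        push_cast
        gcongr
        linarith
    _ = 802 * Y * (1 + Real.log X) := by ring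

end HyperbolaBlocks

section DivisibilityCount

lemma natCast_div_eq_sub_sawtooth (X m : ℕ) :
    ((X / m : ℕ) : ℝ) = X / m - 1 / 2 - sawtooth (X / m) := by
  rw [← intCast_floor_eq_sub_sawtooth, ← natCast_floor_eq_intCast_floor (by positivity),
    Nat.floor_div_eq_div]

/-- Since `⌊(X - n) / n⌋ = ⌊X / n⌋ - 1`, we have `d ∣ ⌊X / n⌋` exactly when `⌊X / (n * d)⌋` exceeds
`⌊(X - n) / (n * d)⌋`. -/
lemma ite_dvd_div_eq_sawtooth {X n d : ℕ} (hn : 0 < n) (hnX : n ≤ X) (hd : 0 < d) :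
    (if d ∣ X / n then 1 else 0 : ℝ) =
      1 / d - sawtooth (X / d / n) + sawtooth (X / d / n - 1 / d) := by
  have hquot : X / n = (X - n) / n + 1 := Nat.div_eq_sub_div hn hnX
  have hjump : ((X / (n * d) : ℕ) : ℝ) =
      ((X - n) / (n * d) : ℕ) + if d ∣ X / n then 1 else 0 := by
    rw [← Nat.div_div_eq_div_mul, ← Nat.div_div_eq_div_mul, hquot, Nat.succ_div]
    push_cast
    rfl
  have harg : ((X - n : ℕ) : ℝ) / (n * d : ℕ) = X / d / n - 1 / d := by
    rw [Nat.cast_sub hnX]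
    push_cast
    field_simp
  have harg' : (X : ℝ) / (n * d : ℕ) = X / d / n := by
    push_cast
    field_simp
  rw [natCast_div_eq_sub_sawtooth, natCast_div_eq_sub_sawtooth, harg, harg'] at hjump
  linarith

lemma filter_dvd_div_Ioc_eq_union {d : ℕ} (hd : 0 < d) (X k : ℕ) :
    {n ∈ Ioc 0 (X / (d * k + 1)) | d ∣ X / n} =
      {n ∈ Ioc 0 (X / (d * (k + 1) + 1)) | d ∣ X / n} ∪
        Ioc (X / (d * (k + 1) + 1)) (X / (d * (k + 1))) := by
  ext n
  rcases Nat.eq_zero_or_pos n with rfl | hn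
  · simp
  have hle (m : ℕ) (hm : 0 < m) : n ≤ X / m ↔ m ≤ X / n := by
    rw [Nat.le_div_iff_mul_le hm, Nat.le_div_iff_mul_le hn, mul_comm]
  simp only [mem_union, mem_filter, mem_Ioc, hn, true_and, ← not_le,
    hle _ (Nat.add_one_pos _), hle _ (Nat.mul_pos hd k.add_one_pos)]
  constructor
  · rintro ⟨hlt, e, he⟩
    have hke : k < e := lt_of_mul_lt_mul_left (he ▸ hlt) d.zero_le
    have hmul : d * (k + 1) ≤ d * e := Nat.mul_le_mul_left d hke
    rw [← he] at hmul
    by_cases h : d * (k + 1) + 1 ≤ X / n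
    · exact .inl ⟨h, e, he⟩
    · exact .inr ⟨h, hmul⟩
  · rintro (⟨hlt, hdvd⟩ | ⟨hlt, hge⟩)
    · exact ⟨le_trans (by gcongr; lia) hlt, hdvd⟩
    · exact ⟨lt_of_lt_of_le (by gcongr; lia) hge, k + 1, by lia⟩

lemma card_filter_dvd_div_eq_add_sum {d : ℕ} (hd : 0 < d) (X U : ℕ) :
    (#{n ∈ Ioc 0 X | d ∣ X / n} : ℝ) = #{n ∈ Ioc 0 (X / (d * U + 1)) | d ∣ X / n} +
      ∑ k ∈ Ioc 0 U, (((X / (d * k) : ℕ) : ℝ) - (X / (d * k + 1) : ℕ)) := by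
  induction U with
  | zero => simp
  | succ U ih =>
    have hdisj : Disjoint {n ∈ Ioc 0 (X / (d * (U + 1) + 1)) | d ∣ X / n}
        (Ioc (X / (d * (U + 1) + 1)) (X / (d * (U + 1)))) :=
      (Ioc_disjoint_Ioc_of_le le_rfl).mono_left (filter_subset _ _)
    rw [ih, filter_dvd_div_Ioc_eq_union hd, card_union_of_disjoint hdisj, Nat.card_Ioc,
      sum_Ioc_succ_top U.zero_le, Nat.cast_add, Nat.cast_sub (Nat.div_le_div_left (by lia)
      (Nat.mul_pos hd U.succ_pos))]
    ring

lemma abs_card_filter_dvd_div_sub_le {X d M : ℕ} {Y : ℝ} (hd : 0 < d) (hY : 0 < Y)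
    (hYX : Y ^ 3 = X / d) (hMX : M ≤ X) (hMY : (M + 1 : ℝ) ^ 2 ≤ 9 * Y ^ 3) :
    |(#{n ∈ Ioc 0 M | d ∣ X / n} : ℝ) - M / d| ≤ 1604 * Y * (1 + Real.log X) := by
  have hcount : (#{n ∈ Ioc 0 M | d ∣ X / n} : ℝ) - M / d =
      ∑ n ∈ Ioc 0 M, sawtooth (Y ^ 3 / (n + 0) + -(1 / d)) -
        ∑ n ∈ Ioc 0 M, sawtooth (Y ^ 3 / (n + 0) + 0) := by
    have hterm : ∀ n ∈ Ioc 0 M, (if d ∣ X / n then 1 else 0 : ℝ) = 1 / d +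
        (sawtooth (Y ^ 3 / (n + 0) + -(1 / d)) - sawtooth (Y ^ 3 / (n + 0) + 0)) := by
      intro n hn
      rw [mem_Ioc] at hn
      rw [ite_dvd_div_eq_sawtooth hn.1 (hn.2.trans hMX) hd, hYX, add_zero, add_zero,
        ← sub_eq_add_neg]
      ring
    rw [natCast_card_filter, sum_congr rfl hterm, sum_add_distrib, sum_sub_distrib, sum_const,
      Nat.card_Ioc, nsmul_eq_mul, Nat.sub_zero]
    ring
  have hsum (b : ℝ) := abs_sum_Ioc_sawtooth_div_add_le hY le_rfl zero_le_one b hMX hMY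
  rw [hcount]
  refine (abs_sub _ _).trans ((add_le_add (hsum _) (hsum _)).trans_eq ?_)
  ring

lemma abs_sum_natCast_div_sub_le {X d U : ℕ} {Y : ℝ} (hd : 0 < d) (hY : 0 < Y)
    (hYX : Y ^ 3 = X / d) (hUX : U ≤ X) (hUY : (U + 1 : ℝ) ^ 2 ≤ 9 * Y ^ 3) :
    |∑ k ∈ Ioc 0 U, (((X / (d * k) : ℕ) : ℝ) - (X / (d * k + 1) : ℕ)) -
        X * ∑ k ∈ Ioc 0 U, 1 / ((d * k) * (d * k + 1) : ℝ)| ≤ 1604 * Y * (1 + Real.log X) := by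
  have hdiff : ∑ k ∈ Ioc 0 U, (((X / (d * k) : ℕ) : ℝ) - (X / (d * k + 1) : ℕ)) -
        X * ∑ k ∈ Ioc 0 U, 1 / ((d * k) * (d * k + 1) : ℝ) =
      ∑ k ∈ Ioc 0 U, sawtooth (Y ^ 3 / (k + 1 / d) + 0) -
        ∑ k ∈ Ioc 0 U, sawtooth (Y ^ 3 / (k + 0) + 0) := by
    rw [mul_sum, ← sum_sub_distrib, ← sum_sub_distrib]
    refine sum_congr rfl fun k hk => ?_
    have hk : (0 : ℝ) < k := by exact_mod_cast (mem_Ioc.1 hk).1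
    have harg : (X : ℝ) / (d * k : ℕ) = Y ^ 3 / (k + 0) + 0 := by
      rw [hYX]; push_cast; field_simp; ring
    have harg' : (X : ℝ) / (d * k + 1 : ℕ) = Y ^ 3 / (k + 1 / d) + 0 := by
      rw [hYX]; push_cast; field_simp; ring
    have hmain : (X : ℝ) * (1 / ((d * k) * (d * k + 1) : ℝ)) =
        X / (d * k : ℕ) - X / (d * k + 1 : ℕ) := by
      push_cast; field_simp; ring
    rw [natCast_div_eq_sub_sawtooth, natCast_div_eq_sub_sawtooth, hmain, harg, harg']
    ring
  have hd₁ : 1 / (d : ℝ) ≤ 1 := (one_div _).trans_le (Nat.cast_inv_le_one d)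
  rw [hdiff]
  refine (abs_sub _ _).trans ((add_le_add
    (abs_sum_Ioc_sawtooth_div_add_le hY (by positivity) hd₁ 0 hUX hUY)
    (abs_sum_Ioc_sawtooth_div_add_le hY le_rfl zero_le_one 0 hUX hUY)).trans_eq ?_)
  ring

end DivisibilityCount

section DivisibilityDensity

/-- The asymptotic density of the `n ≤ X` such that `d ∣ ⌊X / n⌋`: the total length of the
intervals `(1 / (dk + 1), 1 / (dk)]`, `k ≥ 1`, which contain `n / X` for these `n`. The `k = 0`
term of the series is `1 / 0 = 0`. -/
noncomputable def dvdFloorDensity (d : ℕ) : ℝ := ∑' k : ℕ, 1 / ((d * k) * (d * k + 1) : ℝ)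

lemma dvdFloorDensity_nonneg (d : ℕ) : 0 ≤ dvdFloorDensity d :=
  tsum_nonneg fun _ => by positivity

lemma one_div_mul_add_one_le (d k : ℕ) :
    1 / ((d * k) * (d * k + 1) : ℝ) ≤ 1 / d ^ 2 * (1 / k ^ 2) := by
  rcases Nat.eq_zero_or_pos (d * k) with h | h
  · rw [← Nat.cast_mul, h, Nat.cast_zero, zero_mul, div_zero]
    positivity
  have h : (0 : ℝ) < d * k := by exact_mod_cast h
  rw [one_div_mul_one_div, ← mul_pow]
  gcongr
  nlinarith

lemma one_div_mul_add_one_le_telescope (d : ℕ) {k : ℕ} (hk : 0 < k) :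
    1 / ((d * (k + 1 : ℕ)) * (d * (k + 1 : ℕ) + 1) : ℝ) ≤
      1 / d ^ 2 * (1 / k - 1 / (k + 1 : ℕ)) := by
  have hk : (0 : ℝ) < k := by exact_mod_cast hk
  refine (one_div_mul_add_one_le d (k + 1)).trans ?_
  gcongr
  push_cast
  rw [div_sub_div _ _ hk.ne' (by positivity), div_le_div_iff₀ (by positivity) (by positivity)]
  nlinarith

lemma telescope_le_one_div_mul_add_one {d k : ℕ} (hd : 0 < d) (hk : 0 < k) :
    1 / d ^ 2 * (1 / k - 1 / (k + 1 : ℕ)) ≤ 1 / ((d * k) * (d * k + 1) : ℝ) := by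
  have hd : (1 : ℝ) ≤ d := by exact_mod_cast hd
  calc (1 / d ^ 2 * (1 / k - 1 / (k + 1 : ℕ)) : ℝ) = 1 / ((d * k) * (d * k + d)) := by
        push_cast; field_simp; ring
    _ ≤ 1 / ((d * k) * (d * k + 1)) := by gcongr

lemma summable_one_div_mul_add_one (d : ℕ) :
    Summable fun k : ℕ => 1 / ((d * k) * (d * k + 1) : ℝ) :=
  .of_nonneg_of_le (fun _ => by positivity) (one_div_mul_add_one_le d)
    ((Real.summable_one_div_nat_pow.2 one_lt_two).mul_left _)

lemma hasSum_one_div_sub_one_div_natCast_add {U : ℕ} (hU : 0 < U) :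
    HasSum (fun k : ℕ => (1 / (k + U : ℕ) - 1 / (k + U + 1 : ℕ) : ℝ)) (1 / U) := by
  have hanti (k : ℕ) : (0 : ℝ) ≤ 1 / (k + U : ℕ) - 1 / (k + U + 1 : ℕ) := by
    rw [sub_nonneg]
    exact one_div_le_one_div_of_le (by exact_mod_cast (by lia)) (by exact_mod_cast (by lia))
  rw [hasSum_iff_tendsto_nat_of_nonneg hanti]
  have hlim := ((tendsto_one_div_atTop_nhds_zero_nat (𝕜 := ℝ)).comp
    (tendsto_add_atTop_nat U)).const_sub (1 / U : ℝ)
  rw [sub_zero] at hlim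
  refine hlim.congr fun n => ?_
  simp_rw [add_right_comm _ U]
  rw [sum_range_sub' (fun k : ℕ => (1 / (k + U : ℕ) : ℝ)), zero_add, Function.comp_apply]

lemma hasSum_dvdFloorDensity_sub_sum_Ioc (d U : ℕ) :
    HasSum (fun k : ℕ => 1 / ((d * (k + U + 1 : ℕ)) * (d * (k + U + 1 : ℕ) + 1) : ℝ))
      (dvdFloorDensity d - ∑ k ∈ Ioc 0 U, 1 / ((d * k) * (d * k + 1) : ℝ)) := by
  have hIoc : ∑ k ∈ range (U + 1), 1 / ((d * k) * (d * k + 1) : ℝ) =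
      ∑ k ∈ Ioc 0 U, 1 / ((d * k) * (d * k + 1) : ℝ) := by
    rw [range_eq_Ico, sum_eq_sum_Ico_succ_bot U.add_one_pos, Nat.cast_zero, mul_zero, zero_mul,
      div_zero, zero_add]
    rfl
  rw [← hIoc]
  exact (hasSum_nat_add_iff' (U + 1)).2 (summable_one_div_mul_add_one d).hasSum

lemma dvdFloorDensity_sub_sum_Ioc_le (d : ℕ) {U : ℕ} (hU : 0 < U) :
    dvdFloorDensity d - ∑ k ∈ Ioc 0 U, 1 / ((d * k) * (d * k + 1) : ℝ) ≤ 1 / d ^ 2 * (1 / U) :=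
  hasSum_le (fun k => one_div_mul_add_one_le_telescope d (by lia))
    (hasSum_dvdFloorDensity_sub_sum_Ioc d U)
    ((hasSum_one_div_sub_one_div_natCast_add hU).mul_left _)

lemma le_dvdFloorDensity_sub_sum_Ioc {d : ℕ} (hd : 0 < d) (U : ℕ) :
    1 / d ^ 2 * (1 / (U + 1 : ℕ)) ≤
      dvdFloorDensity d - ∑ k ∈ Ioc 0 U, 1 / ((d * k) * (d * k + 1) : ℝ) :=
  hasSum_le (fun k => telescope_le_one_div_mul_add_one hd (by lia))
    ((hasSum_one_div_sub_one_div_natCast_add U.add_one_pos).mul_left _)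
    (hasSum_dvdFloorDensity_sub_sum_Ioc d U)

lemma dvdFloorDensity_le (d : ℕ) : dvdFloorDensity d ≤ 2 / d ^ 2 := by
  have htail := dvdFloorDensity_sub_sum_Ioc_le d one_pos
  have hhead := one_div_mul_add_one_le d 1
  rw [show Ioc 0 1 = {1} from rfl, sum_singleton] at htail
  calc dvdFloorDensity d ≤ 1 / d ^ 2 * (1 / (1 : ℕ) ^ 2) + 1 / d ^ 2 * (1 / (1 : ℕ)) := by
        linarith
    _ = 2 / d ^ 2 := by push_cast; ring

lemma card_filter_dvd_div_eq_zero {X d : ℕ} (hXd : X < d) : #{n ∈ Ioc 0 X | d ∣ X / n} = 0 := by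
  refine card_eq_zero.2 (filter_eq_empty_iff.2 fun n hn hdvd => ?_)
  rw [mem_Ioc] at hn
  have hle := Nat.le_of_dvd (Nat.div_pos hn.2 hn.1) hdvd
  exact (hle.trans (X.div_le_self n)).not_gt hXd

lemma natCast_div_mul_add_one_mem_Icc {X d U : ℕ} (hd : 0 < d) (hU : 0 < U) :
    ((X / (d * U + 1) : ℕ) : ℝ) ∈ Set.Icc (X / d / (U + 1) - 1 : ℝ) (X / d / U) := by
  have hd₁ : (1 : ℝ) ≤ d := by exact_mod_cast hd
  constructor
  · have hlt : (X / (d * U + 1 : ℕ) : ℝ) < (X / (d * U + 1) : ℕ) + 1 := by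
      rw [← Nat.floor_div_eq_div (K := ℝ)]
      exact Nat.lt_floor_add_one _
    have hle : (X / d / (U + 1) : ℝ) ≤ X / (d * U + 1 : ℕ) := by
      rw [div_div]
      gcongr
      push_cast
      linarith
    linarith
  · refine Nat.cast_div_le.trans ?_
    rw [div_div]
    gcongr
    push_cast
    linarith

lemma abs_natCast_div_div_sub_le {X d U : ℕ} (hd : 0 < d) (hU : 0 < U)
    (hXU : (X / d : ℝ) ≤ (U + 1) ^ 2) :
    |((X / (d * U + 1) : ℕ) : ℝ) / d - X * (dvdFloorDensity d -
      ∑ k ∈ Ioc 0 U, 1 / ((d * k) * (d * k + 1) : ℝ))| ≤ 3 := by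
  have hd₁ : (1 : ℝ) ≤ d := by exact_mod_cast hd
  have hU₁ : (1 : ℝ) ≤ U := by exact_mod_cast hU
  have hquot := natCast_div_mul_add_one_mem_Icc (X := X) hd hU
  have hupper := mul_le_mul_of_nonneg_left (dvdFloorDensity_sub_sum_Ioc_le d hU) X.cast_nonneg
  have hlower := mul_le_mul_of_nonneg_left (le_dvdFloorDensity_sub_sum_Ioc hd U) X.cast_nonneg
  have hgap : (X / d / U - X / d / (U + 1) : ℝ) ≤ 2 := by
    rw [div_sub_div _ _ (by positivity) (by positivity), div_le_iff₀ (by positivity)]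
    nlinarith
  calc _ ≤ (X / d / U / d - (X / d / (U + 1) - 1) / d : ℝ) := by
        refine abs_sub_le_of_le_of_le (by gcongr; exact hquot.1) (by gcongr; exact hquot.2)
          (le_trans ?_ hlower) (hupper.trans_eq (by ring))
        calc ((X / d / (U + 1) - 1) / d : ℝ) ≤ X / d / (U + 1) / d := by
              gcongr; linarith
          _ = X * (1 / d ^ 2 * (1 / (U + 1 : ℕ))) := by push_cast; ring
    _ = (X / d / U - X / d / (U + 1) + 1) / d := by ring
    _ ≤ 3 / d := by gcongr; linarith
    _ ≤ 3 := div_le_self (by norm_num) hd₁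

lemma exists_hyperbola_cutoff {X d : ℕ} (hd : 0 < d) (hdX : d ≤ X) :
    ∃ U : ℕ, 0 < U ∧ U ≤ X ∧ (X / d : ℝ) ≤ (U + 1) ^ 2 ∧ (U + 1 : ℝ) ^ 2 ≤ 9 * (X / d) ∧
      (((X / (d * U + 1) : ℕ) : ℝ) + 1) ^ 2 ≤ 9 * (X / d) := by
  have hd₁ : (1 : ℝ) ≤ d := by exact_mod_cast hd
  set s := √(X / d : ℝ)
  have hs_sq : (X / d : ℝ) = s ^ 2 := (Real.sq_sqrt (by positivity)).symm
  have hs₁ : 1 ≤ s := Real.one_le_sqrt.2 ((one_le_div (by positivity)).2 (by exact_mod_cast hdX))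
  have hU : 0 < ⌊s⌋₊ := Nat.floor_pos.2 hs₁
  have hUs : (⌊s⌋₊ : ℝ) ≤ s := Nat.floor_le (by positivity)
  have hsU : s < ⌊s⌋₊ + 1 := Nat.lt_floor_add_one s
  have hU₁ : (1 : ℝ) ≤ ⌊s⌋₊ := by exact_mod_cast hU
  refine ⟨⌊s⌋₊, hU, ?_, ?_, ?_, ?_⟩
  · have : (⌊s⌋₊ : ℝ) ≤ X := by
      calc (⌊s⌋₊ : ℝ) ≤ s ^ 2 := by nlinarith
        _ ≤ X := hs_sq.symm.trans_le (div_le_self X.cast_nonneg hd₁)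
    exact_mod_cast this
  · rw [hs_sq]
    gcongr
  · rw [hs_sq]
    nlinarith
  · have hquot : ((X / (d * ⌊s⌋₊ + 1) : ℕ) : ℝ) ≤ 2 * s := by
      refine (natCast_div_mul_add_one_mem_Icc hd hU).2.trans ?_
      rw [hs_sq, div_le_iff₀ (by positivity)]
      nlinarith
    calc _ ≤ (3 * s) ^ 2 := by gcongr; linarith
      _ = 9 * (X / d) := by rw [hs_sq]; ring

variable {X d : ℕ} {Y : ℝ}

lemma abs_card_filter_dvd_div_sub_dvdFloorDensity_le_of_lt (hY : 0 < Y) (hYX : Y ^ 3 = X / d)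
    (hXd : X < d) : |(#{n ∈ Ioc 0 X | d ∣ X / n} : ℝ) - X * dvdFloorDensity d| ≤ 2 * Y := by
  have hd₁ : (1 : ℝ) ≤ d := by exact_mod_cast Nat.one_le_of_lt hXd
  have hY₁ : Y ≤ 1 := by
    rw [← pow_le_one_iff_of_nonneg hY.le three_ne_zero, hYX]
    exact div_le_one_of_le₀ (by exact_mod_cast hXd.le) d.cast_nonneg
  rw [card_filter_dvd_div_eq_zero hXd, Nat.cast_zero, zero_sub, abs_neg,
    abs_of_nonneg (mul_nonneg X.cast_nonneg (dvdFloorDensity_nonneg d))]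
  calc X * dvdFloorDensity d ≤ X * (2 / d ^ 2) := by gcongr; exact dvdFloorDensity_le d
    _ = 2 * Y ^ 3 / d := by rw [hYX]; ring
    _ ≤ 2 * Y ^ 3 := div_le_self (by positivity) hd₁
    _ ≤ 2 * Y := by gcongr; exact pow_le_of_le_one hY.le hY₁ three_ne_zero

lemma abs_card_filter_dvd_div_sub_dvdFloorDensity_le_of_le (hd : 0 < d) (hY : 0 < Y)
    (hYX : Y ^ 3 = X / d) (hdX : d ≤ X) :
    |(#{n ∈ Ioc 0 X | d ∣ X / n} : ℝ) - X * dvdFloorDensity d| ≤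
      3208 * Y * (1 + Real.log X) + 3 := by
  obtain ⟨U, hU, hUX, hXU, hUY, hMY⟩ := exists_hyperbola_cutoff hd hdX
  rw [← hYX] at hUY hMY
  have hlarge := abs_card_filter_dvd_div_sub_le hd hY hYX (Nat.div_le_self _ _) hMY
  have hsmall := abs_sum_natCast_div_sub_le hd hY hYX hUX hUY
  have htail := abs_natCast_div_div_sub_le hd hU hXU
  rw [card_filter_dvd_div_eq_add_sum hd X U]
  rw [abs_le] at *
  constructor <;> linarith [hlarge.1, hlarge.2]

lemma abs_card_filter_dvd_div_sub_dvdFloorDensity_le (hd : 0 < d) (hY : 0 < Y)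
    (hYX : Y ^ 3 = X / d) :
    |(#{n ∈ Ioc 0 X | d ∣ X / n} : ℝ) - X * dvdFloorDensity d| ≤
      3211 * Y * (1 + Real.log X) := by
  have hYlog : Y ≤ Y * (1 + Real.log X) :=
    le_mul_of_one_le_right hY.le (by linarith [Real.log_natCast_nonneg X])
  rcases lt_or_ge X d with hXd | hdX
  · linarith [abs_card_filter_dvd_div_sub_dvdFloorDensity_le_of_lt hY hYX hXd]
  have hY₁ : 1 ≤ Y := by
    rw [← one_le_pow_iff_of_nonneg hY.le three_ne_zero, hYX]
    exact (one_le_div (by positivity)).2 (by exact_mod_cast hdX)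
  linarith [abs_card_filter_dvd_div_sub_dvdFloorDensity_le_of_le hd hY hYX hdX]

end DivisibilityDensity

section DivisorSums

lemma hasSum_mul_tsum_mul_eq_tsum_sum_divisors_mul {a b : ℕ → ℝ} (hb : b 0 = 0)
    (hab : Summable fun p : ℕ × ℕ => a p.1 * b (p.1 * p.2)) :
    HasSum (fun d => a d * ∑' k, b (d * k)) (∑' m, (∑ d ∈ m.divisors, a d) * b m) := by
  have hfiber (m : ℕ) : ∑' p : (fun p : ℕ × ℕ => p.1 * p.2) ⁻¹' {m},
      a p.1.1 * b (p.1.1 * p.1.2) = (∑ d ∈ m.divisors, a d) * b m := by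
    have hconst (p : (fun p : ℕ × ℕ => p.1 * p.2) ⁻¹' {m}) :
        a p.1.1 * b (p.1.1 * p.1.2) = a p.1.1 * b m := by
      rw [show p.1.1 * p.1.2 = m from p.2]
    simp_rw [hconst, tsum_mul_right]
    rcases eq_or_ne m 0 with rfl | hm
    · rw [hb, mul_zero, mul_zero]
    have hset : (fun p : ℕ × ℕ => p.1 * p.2) ⁻¹' {m} = (m.divisorsAntidiagonal : Set (ℕ × ℕ)) := by
      ext p
      simp [hm]
    rw [hset, Finset.tsum_subtype' m.divisorsAntidiagonal fun p : ℕ × ℕ => a p.1,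
      Nat.sum_divisorsAntidiagonal fun d _ => a d]
  have hgroup := hab.hasSum.tsum_fiberwise fun p : ℕ × ℕ => p.1 * p.2
  simp_rw [hfiber] at hgroup
  rw [hgroup.tsum_eq]
  simpa only [tsum_mul_left] using
    hab.hasSum.prod_fiberwise fun d => (hab.prod_factor d).hasSum

lemma hasSum_mul_card_filter_dvd_div (a : ℕ → ℝ) (X : ℕ) :
    HasSum (fun d => a d * #{n ∈ Ioc 0 X | d ∣ X / n})
      (∑ n ∈ Ioc 0 X, ∑ d ∈ (X / n).divisors, a d) := by
  have hterm : ∀ n ∈ Ioc 0 X, HasSum (fun d => if d ∣ X / n then a d else 0)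
      (∑ d ∈ (X / n).divisors, a d) := by
    intro n hn
    rw [mem_Ioc] at hn
    have hne : X / n ≠ 0 := (Nat.div_pos hn.2 hn.1).ne'
    have hval : ∑ d ∈ (X / n).divisors, a d =
        ∑ d ∈ (X / n).divisors, if d ∣ X / n then a d else 0 :=
      sum_congr rfl fun d hd => (if_pos (Nat.dvd_of_mem_divisors hd)).symm
    rw [hval]
    exact hasSum_sum_of_ne_finset_zero fun d hd => if_neg fun h =>
      hd (Nat.mem_divisors.2 ⟨h, hne⟩)
  convert hasSum_sum hterm using 2 with d
  rw [← sum_filter, sum_const, nsmul_eq_mul, mul_comm]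

variable {a : ℕ → ℝ}

lemma hasSum_mul_dvdFloorDensity (ha : Summable fun d : ℕ => |a d| / (d : ℝ) ^ (1 / 3 : ℝ)) :
    HasSum (fun d => a d * dvdFloorDensity d)
      (∑' m : ℕ, (∑ d ∈ m.divisors, a d) * (1 / (m * (m + 1)))) := by
  have hsq : Summable fun k : ℕ => 1 / (k : ℝ) ^ 2 := Real.summable_one_div_nat_pow.2 one_lt_two
  have hbound (d k : ℕ) : ‖a d * (1 / ((d * k : ℕ) * ((d * k : ℕ) + 1)))‖ ≤
      |a d| / (d : ℝ) ^ (1 / 3 : ℝ) * (1 / k ^ 2) := by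
    rcases Nat.eq_zero_or_pos d with rfl | hd
    · simp
    have hd : (1 : ℝ) ≤ d := by exact_mod_cast hd
    have hpow : (d : ℝ) ^ (1 / 3 : ℝ) ≤ d ^ 2 := by
      rw [← Real.rpow_natCast]
      exact Real.rpow_le_rpow_of_exponent_le hd (by norm_num)
    rw [norm_mul, Real.norm_eq_abs, Real.norm_of_nonneg (by positivity)]
    push_cast
    calc _ ≤ |a d| * (1 / d ^ 2 * (1 / k ^ 2)) := by gcongr; exact one_div_mul_add_one_le d k
      _ = |a d| / d ^ 2 * (1 / k ^ 2) := by ring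
      _ ≤ _ := by gcongr
  have hsum : Summable fun p : ℕ × ℕ =>
      a p.1 * (1 / ((p.1 * p.2 : ℕ) * ((p.1 * p.2 : ℕ) + 1) : ℝ)) :=
    .of_norm_bounded (ha.mul_of_nonneg hsq (fun _ => by positivity) fun _ => by positivity)
      fun p => hbound p.1 p.2
  convert hasSum_mul_tsum_mul_eq_tsum_sum_divisors_mul
    (b := fun m : ℕ => 1 / (m * (m + 1) : ℝ)) (by simp) hsum using 4 with d
  push_cast
  rfl

lemma abs_card_filter_dvd_div_sub_dvdFloorDensity_le_rpow {X : ℕ} (hX : 0 < X) (d : ℕ) :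
    |(#{n ∈ Ioc 0 X | d ∣ X / n} : ℝ) - X * dvdFloorDensity d| ≤
      3211 * ((X : ℝ) ^ (1 / 3 : ℝ) / (d : ℝ) ^ (1 / 3 : ℝ)) * (1 + Real.log X) := by
  rcases Nat.eq_zero_or_pos d with rfl | hd
  · have hempty : {n ∈ Ioc 0 X | 0 ∣ X / n} = ∅ := filter_eq_empty_iff.2 fun n hn => by
      rw [mem_Ioc] at hn
      exact zero_dvd_iff.not.2 (Nat.div_pos hn.2 hn.1).ne'
    rw [hempty]
    simp [dvdFloorDensity]
  have hY : 0 < (X / d : ℝ) ^ (1 / 3 : ℝ) := by positivity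
  rw [← Real.div_rpow X.cast_nonneg d.cast_nonneg]
  refine abs_card_filter_dvd_div_sub_dvdFloorDensity_le hd hY ?_
  rw [← Real.rpow_mul_natCast (by positivity)]
  norm_num

lemma abs_sum_sum_divisors_div_sub_le (ha : Summable fun d : ℕ => |a d| / (d : ℝ) ^ (1 / 3 : ℝ))
    {X : ℕ} (hX : 0 < X) :
    |∑ n ∈ Ioc 0 X, ∑ d ∈ (X / n).divisors, a d -
        X * ∑' m : ℕ, (∑ d ∈ m.divisors, a d) * (1 / (m * (m + 1)))| ≤
      3211 * (∑' d : ℕ, |a d| / (d : ℝ) ^ (1 / 3 : ℝ)) *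
        ((X : ℝ) ^ (1 / 3 : ℝ) * (1 + Real.log X)) := by
  have herror := (hasSum_mul_card_filter_dvd_div a X).sub
    ((hasSum_mul_dvdFloorDensity ha).mul_left (X : ℝ))
  rw [← herror.tsum_eq, ← Real.norm_eq_abs]
  refine (tsum_of_norm_bounded (ha.hasSum.mul_left
    (3211 * ((X : ℝ) ^ (1 / 3 : ℝ) * (1 + Real.log X)))) fun d => ?_).trans_eq (by ring)
  rw [mul_left_comm, ← mul_sub, Real.norm_eq_abs, abs_mul]
  calc _ ≤ |a d| * (3211 * ((X : ℝ) ^ (1 / 3 : ℝ) / (d : ℝ) ^ (1 / 3 : ℝ)) * (1 + Real.log X)) := by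
        gcongr
        exact abs_card_filter_dvd_div_sub_dvdFloorDensity_le_rpow hX d
    _ = _ := by ring

lemma sum_divisors_mul_div_eq_sum_div {g : ℕ → ℝ} {m : ℕ} (hm : m ≠ 0) :
    (∑ d ∈ m.divisors, (d : ℝ) * g (m / d)) / m = ∑ d ∈ m.divisors, g d / d := by
  rw [sum_div, ← Nat.sum_div_divisors m fun d => g d / d]
  refine sum_congr rfl fun d hd => ?_
  have hd₀ : (d : ℝ) ≠ 0 := by exact_mod_cast (Nat.pos_of_mem_divisors hd).ne'
  have hm₀ : (m : ℝ) ≠ 0 := by exact_mod_cast hm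
  rw [Nat.cast_div (Nat.dvd_of_mem_divisors hd) hd₀]
  field_simp

lemma isBigO_comp_floor_sub_mul {F : ℕ → ℝ} {T K r : ℝ} (hr : 0 ≤ r)
    (hF : ∀ X : ℕ, 0 < X → |F X - X * T| ≤ K * ((X : ℝ) ^ r * (1 + Real.log X))) :
    (fun x : ℝ => F ⌊x⌋₊ - x * T) =O[atTop] fun x : ℝ => x ^ r * Real.log x := by
  have hK : 0 ≤ K := by simpa using (abs_nonneg _).trans (hF 1 one_pos)
  refine Asymptotics.IsBigO.of_bound (2 * K + |T|) ?_
  filter_upwards [eventually_ge_atTop (Real.exp 1)] with x hx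
  have hx₁ : 1 ≤ x := (Real.one_le_exp zero_le_one).trans hx
  have hlog : 1 ≤ Real.log x := (Real.le_log_iff_exp_le (by positivity)).2 hx
  have hX : 0 < ⌊x⌋₊ := Nat.floor_pos.2 hx₁
  have hXx : (⌊x⌋₊ : ℝ) ≤ x := Nat.floor_le (by positivity)
  have hmain : |F ⌊x⌋₊ - ⌊x⌋₊ * T| ≤ K * (x ^ r * (2 * Real.log x)) := by
    refine (hF _ hX).trans ?_
    have hlog_le : Real.log (⌊x⌋₊ : ℝ) ≤ Real.log x :=
      Real.log_le_log (by exact_mod_cast hX) hXx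
    gcongr
    linarith
  have hfract : |⌊x⌋₊ * T - x * T| ≤ |T| * (x ^ r * Real.log x) := by
    rw [← sub_mul, abs_mul, mul_comm]
    gcongr
    refine le_trans ?_ (one_le_mul_of_one_le_of_one_le (Real.one_le_rpow hx₁ hr) hlog)
    rw [abs_le]
    constructor <;> linarith [Nat.lt_floor_add_one x]
  rw [Real.norm_eq_abs, Real.norm_of_nonneg (by positivity)]
  calc _ ≤ |F ⌊x⌋₊ - ⌊x⌋₊ * T| + |⌊x⌋₊ * T - x * T| := abs_sub_le _ _ _
    _ ≤ K * (x ^ r * (2 * Real.log x)) + |T| * (x ^ r * Real.log x) := add_le_add hmain hfract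
    _ = _ := by ring

lemma summable_abs_div_rpow_of_abs_le {g : ℕ → ℝ} {C r : ℝ} (hr : 1 < r)
    (hg : ∀ n : ℕ, 1 ≤ n → |g n| ≤ C) : Summable fun n : ℕ => |g n| / (n : ℝ) ^ r := by
  refine .of_nonneg_of_le (fun _ => by positivity) (fun n => ?_)
    ((Real.summable_one_div_nat_rpow.2 hr).mul_left C)
  rcases Nat.eq_zero_or_pos n with rfl | hn
  · simp [Real.zero_rpow (zero_lt_one.trans hr).ne']
  rw [mul_one_div]
  gcongr
  exact hg n hn

theorem sum_f_floor_div_asymptotic_general (f g : ℕ → ℝ)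
    (hf : ∀ n : ℕ, 1 ≤ n → f n = ∑ d ∈ n.divisors, (d : ℝ) * g (n / d))
    (hg : Summable fun n : ℕ => |g n| / (n : ℝ) ^ (4 / 3 : ℝ)) :
    (fun x : ℝ =>
        (∑ n ∈ Finset.Icc 1 ⌊x⌋₊, f ⌊x / (n : ℝ)⌋₊ / (⌊x / (n : ℝ)⌋₊ : ℝ)) -
        x * ∑' m : ℕ, f m / (m ^ 2 * (m + 1)))
    =O[atTop] fun x : ℝ => x ^ ((1 : ℝ) / 3) * Real.log x := by
  have hsum : Summable fun d : ℕ => |g d / d| / (d : ℝ) ^ (1 / 3 : ℝ) := hg.congr fun d => by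
    rcases Nat.eq_zero_or_pos d with rfl | hd
    · simp
    have hd : (d : ℝ) ≠ 0 := by exact_mod_cast hd.ne'
    rw [abs_div, Nat.abs_cast, div_div, mul_comm, ← Real.rpow_add_one hd]
    norm_num
  have hfm (m : ℕ) : f m / m = ∑ d ∈ m.divisors, g d / d := by
    rcases Nat.eq_zero_or_pos m with rfl | hm
    · simp
    rw [hf m hm, sum_divisors_mul_div_eq_sum_div hm.ne']
  have hseries (m : ℕ) : f m / (m ^ 2 * (m + 1) : ℝ) =
      (∑ d ∈ m.divisors, g d / d) * (1 / (m * (m + 1))) := by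
    rw [← hfm, div_mul_div_comm, mul_one, ← mul_assoc, sq]
  simp_rw [Nat.floor_div_natCast, hfm, hseries]
  exact isBigO_comp_floor_sub_mul (by norm_num) fun X hX => abs_sum_sum_divisors_div_sub_le hsum hX

end DivisorSums

/-- If `f = id ∗ g` with `g(n) = O(1)`, then
`∑_{n ≤ x} f(⌊x/n⌋)/⌊x/n⌋ = x ∑_{m ≥ 1} f(m)/(m²(m+1)) + O(x^{1/3} log x)`. -/
theorem sum_f_floor_div_asymptotic (f g : ℕ → ℝ)
    (hf : ∀ n : ℕ, 1 ≤ n → f n = ∑ d ∈ n.divisors, (d : ℝ) * g (n / d))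
    (hg : ∃ C : ℝ, ∀ n : ℕ, 1 ≤ n → |g n| ≤ C) :
    (fun x : ℝ =>
        (∑ n ∈ Finset.Icc 1 ⌊x⌋₊, f ⌊x / (n : ℝ)⌋₊ / (⌊x / (n : ℝ)⌋₊ : ℝ)) -
        x * ∑' m : ℕ, f m / (m ^ 2 * (m + 1)))
    =O[atTop] fun x : ℝ => x ^ ((1 : ℝ) / 3) * Real.log x := by
  obtain ⟨C, hC⟩ := hg
  exact sum_f_floor_div_asymptotic_general f g hf (summable_abs_div_rpow_of_abs_le (by norm_num) hC)
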